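/- Assume ‖θ‖_T > 0, 0 < ζ < 1 − exp(−|q_α|‖θ‖_T + ‖θ‖_T²/2), and |q_α| ≥ 2(T+1)‖θ‖_T. Let γ be a maximizer of Γ over [0,ζ] and ν* = (ỹ^γ, v^γ). Then ν* ∈ U, ν* satisfies the VaR constraint at level ζ, J(x,ν*) = A(x) + Γ(γ), and J(x,ν) ≤ A(x) + Γ(γ) for every ν ∈ U satisfying the VaR constraint at level ζ. -/

import Mathlib

open MeasureTheory Real Set Filter
open scoped RealInnerProductSpace ENNReal

noncomputable section

abbrev E (d : ℕ) := EuclideanSpace ℝ (Fin d)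

/-- ω(t) = T − t + 1 -/
def om (T t : ℝ) : ℝ := T - t + 1

/-- running L²-norm ‖y‖_t = (∫₀^t |y_s|² ds)^{1/2} -/
def nrm {d : ℕ} (y : ℝ → E d) (t : ℝ) : ℝ :=
  Real.sqrt (∫ s in Set.Ioc (0:ℝ) t, ‖y s‖ ^ 2)

/-- running inner product (y,θ)_t = ∫₀^t y_s'θ_s ds -/
def ipr {d : ℕ} (y θ : ℝ → E d) (t : ℝ) : ℝ :=
  ∫ s in Set.Ioc (0:ℝ) t, ⟪y s, θ s⟫

/-- membership in L²([0,T];ℝ^d) -/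
def L2fun {d : ℕ} (T : ℝ) (y : ℝ → E d) : Prop :=
  Measurable y ∧ IntegrableOn (fun t => ‖y t‖ ^ 2) (Set.Ioc 0 T)

def k1 {d : ℕ} (T : ℝ) (θ : ℝ → E d) : ℝ :=
  ∫ t in Set.Ioc (0:ℝ) T, om T t * ‖θ t‖ ^ 2

def k2 {d : ℕ} (T : ℝ) (θ : ℝ → E d) : ℝ :=
  ∫ t in Set.Ioc (0:ℝ) T, om T t ^ 2 * ‖θ t‖ ^ 2

/-- G(u,λ) -/
def Gfun {d : ℕ} (T : ℝ) (θ : ℝ → E d) (qa u lam : ℝ) : ℝ :=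
  ∫ t in Set.Ioc (0:ℝ) T,
    (om T t + lam) ^ 2 * ‖θ t‖ ^ 2 / (lam * |qa| + u * (om T t + lam)) ^ 2

open Classical in
/-- ρ(λ) = inf{u ≥ 0 : G(u,λ) ≤ 1}, with value +∞ if no such u exists -/
def rho {d : ℕ} (T : ℝ) (θ : ℝ → E d) (qa lam : ℝ) : ℝ≥0∞ :=
  if {u : ℝ | 0 ≤ u ∧ Gfun T θ qa u lam ≤ 1}.Nonempty then
    ENNReal.ofReal (sInf {u : ℝ | 0 ≤ u ∧ Gfun T θ qa u lam ≤ 1})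
  else ⊤

open Classical in
/-- τ_λ(t), with τ_λ ≡ 1 if ρ(λ) = +∞ -/
def tau {d : ℕ} (T : ℝ) (θ : ℝ → E d) (qa lam t : ℝ) : ℝ :=
  if rho T θ qa lam = ⊤ then 1
  else (rho T θ qa lam).toReal * (om T t + lam) /
    (lam * |qa| + (rho T θ qa lam).toReal * (om T t + lam))

def lamMax {d : ℕ} (T : ℝ) (θ : ℝ → E d) (qa : ℝ) : ℝ :=
  (k1 T θ + Real.sqrt (k2 T θ * (qa ^ 2 - nrm θ T ^ 2) + k1 T θ ^ 2)) /
    (qa ^ 2 - nrm θ T ^ 2)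

/-- Φ(λ) = |q_α|‖τ_λθ‖_T + ½‖τ_λθ‖_T² − ∫₀^T τ_λ(t)|θ_t|² dt -/
def Phi {d : ℕ} (T : ℝ) (θ : ℝ → E d) (qa lam : ℝ) : ℝ :=
  |qa| * nrm (fun t => tau T θ qa lam t • θ t) T
    + nrm (fun t => tau T θ qa lam t • θ t) T ^ 2 / 2
    - ∫ t in Set.Ioc (0:ℝ) T, tau T θ qa lam t * ‖θ t‖ ^ 2

/-- cumulated consumption V_t = ∫₀^t v_s ds -/
def Vtot (v : ℝ → ℝ) (t : ℝ) : ℝ := ∫ s in Set.Ioc (0:ℝ) t, v s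

/-- the set U of admissible deterministic strategies -/
def Admiss {d : ℕ} (T : ℝ) (y : ℝ → E d) (v : ℝ → ℝ) : Prop :=
  Measurable y ∧ IntegrableOn (fun t => ‖y t‖ ^ 2) (Set.Ioc 0 T) ∧
    Measurable v ∧ (∀ t ∈ Set.Icc (0:ℝ) T, 0 < v t) ∧
    IntegrableOn v (Set.Ioc 0 T) ∧
    IntegrableOn (fun t => max (-Real.log (v t)) 0) (Set.Ioc 0 T)

/-- the cost J(x,ν) -/
def Jcost {d : ℕ} (T x : ℝ) (r : ℝ → ℝ) (θ y : ℝ → E d) (v : ℝ → ℝ) : ℝ :=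
  (T + 1) * Real.log x
    + (∫ t in Set.Ioc (0:ℝ) T, om T t * (r t + ⟪y t, θ t⟫ - ‖y t‖ ^ 2 / 2))
    + (∫ t in Set.Ioc (0:ℝ) T, (Real.log (v t) - Vtot v t))
    - Vtot v T

/-- A(x) = (T+1)ln x + ∫₀^T ω(t)r_t dt − T ln T -/
def Aconst (T x : ℝ) (r : ℝ → ℝ) : ℝ :=
  (T + 1) * Real.log x + (∫ t in Set.Ioc (0:ℝ) T, om T t * r t) - T * Real.log T

/-- v^κ_t = κ/(T − tκ) -/
def vk (T k t : ℝ) : ℝ := k / (T - t * k)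

/-- the VaR constraint at level ζ -/
def VaROK {d : ℕ} (T : ℝ) (θ y : ℝ → E d) (v : ℝ → ℝ) (qa z : ℝ) : Prop :=
  ∀ t ∈ Set.Icc (0:ℝ) T,
    Real.log (1 - z) ≤ ipr y θ t - nrm y t ^ 2 / 2 - Vtot v t - |qa| * nrm y t

/-- Γ(κ), where φ(κ) = Φ⁻¹(ln((1−κ)/(1−ζ))) -/
def Gam {d : ℕ} (T : ℝ) (θ : ℝ → E d) (qa z : ℝ) (Finv : ℝ → ℝ) (k : ℝ) : ℝ :=
  Real.log (1 - k) + T * Real.log k +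
    ∫ t in Set.Ioc (0:ℝ) T, om T t * ‖θ t‖ ^ 2 *
      (tau T θ qa (Finv (Real.log ((1 - k) / (1 - z)))) t
        - tau T θ qa (Finv (Real.log ((1 - k) / (1 - z)))) t ^ 2 / 2)

/-- the candidate optimal VaR investment strategy ỹ^κ -/
def ystarV {d : ℕ} (T : ℝ) (θ : ℝ → E d) (qa z : ℝ) (Finv : ℝ → ℝ) (k : ℝ) : ℝ → E d :=
  fun t => tau T θ qa (Finv (Real.log ((1 - k) / (1 - z)))) t • θ t

/-!
For fixed terminal consumption `V_T` the cost splits into an investment part and a consumption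
part.

With `p = v exp (-V)` the consumption part is `∫ ln p`, and `∫ p ≤ 1 - exp (-V_T) =: κ`, so Jensen's
inequality bounds it by `T ln (κ / T)`, with equality for constant `p`, that is for `v^κ`.

The VaR constraint at time `T` says that `K_T(y) ≤ -ln (1 - ζ) - V_T`. For `λ ≥ 0`
the concave Lagrangian `∫ ω (y'θ - |y|²/2) - λ K_T(y)` is stationary at `y = τ_λ θ`, where
`ρ(λ) = ‖τ_λ θ‖_T`, hence maximal there; `λ = φ(κ)` makes `K_T(τ_λ θ) = Φ(λ)` exhaust the budget.
The total is then at most `A(x) + Γ(κ)`.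

It remains that this strategy satisfies the constraint before time `T`. When `|q_α|` is large,
`2 ρ τ_λ ≤ (|q_α| + ρ) τ_λ²`, so that, with `ρ = ‖τ_λ θ‖_T` and `n = ‖τ_λ θ‖_t`,
`K_T - K_t ≥ |q_α| (ρ - n)² / (2 ρ)`, and the constraint is tightest at `T`.
-/

/-- The risk functional `K_t(y) = |q_α| ‖y‖_t + ½ ‖y‖_t² − (y, θ)_t`; the VaR constraint says that
`V_t + K_t(y)` stays below `−ln(1 − ζ)`. -/
def riskBudget {d : ℕ} (θ y : ℝ → E d) (qa t : ℝ) : ℝ :=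
  |qa| * nrm y t + nrm y t ^ 2 / 2 - ipr y θ t

/-- The part `∫₀^T ω(t) (y_t'θ_t − ½|y_t|²) dt` of the cost that depends on the investment `y`. -/
def investmentGain {d : ℕ} (T : ℝ) (θ y : ℝ → E d) : ℝ :=
  ∫ t in Ioc (0 : ℝ) T, om T t * (⟪y t, θ t⟫ - ‖y t‖ ^ 2 / 2)

/-- The part `∫₀^T (ln v_t − V_t) dt` of the cost that depends on the consumption rate `v`. -/
def consumptionGain (T : ℝ) (v : ℝ → ℝ) : ℝ :=
  ∫ t in Ioc (0 : ℝ) T, (log (v t) - Vtot v t)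

/-- The investment strategy `τ_λ θ`. -/
def tauStrategy {d : ℕ} (T : ℝ) (θ : ℝ → E d) (qa lam : ℝ) : ℝ → E d :=
  fun t => tau T θ qa lam t • θ t

/-- `ρ(λ)` as a real number; the infimum is over a nonempty set as soon as `‖θ‖_T > 0` and
`0 ≤ λ`. -/
def rhoReal {d : ℕ} (T : ℝ) (θ : ℝ → E d) (qa lam : ℝ) : ℝ :=
  sInf {u : ℝ | 0 ≤ u ∧ Gfun T θ qa u lam ≤ 1}

/-- The multiplier `φ(κ) = Φ⁻¹(ln((1 − κ)/(1 − ζ)))`. -/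
def budgetMultiplier (z : ℝ) (Finv : ℝ → ℝ) (k : ℝ) : ℝ :=
  Finv (log ((1 - k) / (1 - z)))

section SquareIntegrable

variable {d : ℕ} {T : ℝ} {θ y w : ℝ → E d} {c : ℝ → ℝ} {C : ℝ}

theorem nrm_nonneg (y : ℝ → E d) (t : ℝ) : 0 ≤ nrm y t := sqrt_nonneg _

theorem nrm_sq (y : ℝ → E d) (t : ℝ) : nrm y t ^ 2 = ∫ s in Ioc (0 : ℝ) t, ‖y s‖ ^ 2 :=
  sq_sqrt (integral_nonneg fun _ => sq_nonneg _)

theorem ipr_self (y : ℝ → E d) (t : ℝ) : ipr y y t = nrm y t ^ 2 := by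
  simp only [ipr, nrm_sq, real_inner_self_eq_norm_sq]

theorem L2fun.memLp (hy : L2fun T y) : MemLp y 2 (volume.restrict (Ioc 0 T)) :=
  (memLp_two_iff_integrable_sq_norm hy.1.aestronglyMeasurable).2 hy.2

theorem L2fun.integrableOn_inner (hy : L2fun T y) (hw : L2fun T w) :
    IntegrableOn (fun t => ⟪y t, w t⟫) (Ioc 0 T) :=
  (hy.memLp.norm.integrable_mul hw.memLp.norm).mono' (hy.1.inner hw.1).aestronglyMeasurable
    (Eventually.of_forall fun _ => norm_inner_le_norm _ _)

theorem ipr_le_nrm_mul_nrm (hy : L2fun T y) (hw : L2fun T w) :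
    ipr y w T ≤ nrm y T * nrm w T := by
  have holder : ∫ t in Ioc (0 : ℝ) T, ‖y t‖ * ‖w t‖ ≤ nrm y T * nrm w T := by
    simpa [nrm, sqrt_eq_rpow] using integral_mul_norm_le_Lp_mul_Lq (p := 2) (q := 2)
      HolderConjugate.two_two (by simpa using hy.memLp) (by simpa using hw.memLp)
  exact (integral_mono (hy.integrableOn_inner hw) (hy.memLp.norm.integrable_mul hw.memLp.norm)
    fun _ => real_inner_le_norm _ _).trans holder

theorem L2fun.smul (hy : L2fun T y) (hc : Measurable c) (hC : ∀ t ∈ Ioc 0 T, |c t| ≤ C) :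
    L2fun T (fun t => c t • y t) := by
  refine ⟨hc.smul hy.1, (memLp_two_iff_integrable_sq_norm
    (hc.smul hy.1).aestronglyMeasurable).1 (hy.memLp.of_le_mul (c := C)
      (hc.smul hy.1).aestronglyMeasurable ?_)⟩
  refine ae_restrict_of_forall_mem measurableSet_Ioc fun t ht => ?_
  rw [Pi.smul_apply', norm_smul]
  exact mul_le_mul_of_nonneg_right (hC t ht) (norm_nonneg _)

theorem nrm_smul_le (hy : L2fun T y) (hC0 : 0 ≤ C) (hC : ∀ t ∈ Ioc 0 T, |c t| ≤ C) :
    nrm (fun t => c t • y t) T ≤ C * nrm y T := by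
  refine le_of_sq_le_sq ?_ (mul_nonneg hC0 (nrm_nonneg y T))
  rw [mul_pow, nrm_sq, nrm_sq, ← integral_const_mul]
  refine integral_mono_of_nonneg (Eventually.of_forall fun _ => sq_nonneg _)
    (hy.2.const_mul _) (ae_restrict_of_forall_mem measurableSet_Ioc fun t ht => ?_)
  simp only [norm_smul, mul_pow]
  gcongr
  exact hC t ht

theorem ae_eq_zero_of_nrm_eq_zero (hy : L2fun T y) (h : nrm y T = 0) :
    y =ᵐ[volume.restrict (Ioc 0 T)] 0 := by
  have hint : ∫ t in Ioc (0 : ℝ) T, ‖y t‖ ^ 2 = 0 := by rw [← nrm_sq, h, zero_pow two_ne_zero]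
  rw [integral_eq_zero_iff_of_nonneg (fun _ => sq_nonneg _) hy.2] at hint
  filter_upwards [hint] with t ht
  simpa using ht

theorem sub_nrm_mul_nrm_le_riskBudget (hθ : L2fun T θ) (hy : L2fun T y) (qa : ℝ) :
    (|qa| - nrm θ T) * nrm y T ≤ riskBudget θ y qa T := by
  unfold riskBudget
  linarith [ipr_le_nrm_mul_nrm hy hθ, sq_nonneg (nrm y T)]

theorem one_le_om {t : ℝ} (ht : t ≤ T) : 1 ≤ om T t := by
  unfold om
  linarith

theorem om_le {t : ℝ} (ht : 0 ≤ t) : om T t ≤ T + 1 := by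
  unfold om
  linarith

theorem measurable_om (T : ℝ) : Measurable (om T) := by
  unfold om
  fun_prop

theorem integrableOn_om_mul {f : ℝ → ℝ} (hf : IntegrableOn f (Ioc 0 T)) :
    IntegrableOn (fun t => om T t * f t) (Ioc 0 T) := by
  refine Integrable.bdd_mul (c := T + 1) hf (measurable_om T).aestronglyMeasurable
    (ae_restrict_of_forall_mem measurableSet_Ioc fun t ht => ?_)
  rw [norm_of_nonneg (zero_le_one.trans (one_le_om ht.2))]
  exact om_le ht.1.le

theorem L2fun.integrableOn_growthRate (hθ : L2fun T θ) (hy : L2fun T y) :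
    IntegrableOn (fun t => ⟪y t, θ t⟫ - ‖y t‖ ^ 2 / 2) (Ioc 0 T) :=
  (hy.integrableOn_inner hθ).sub (hy.2.div_const 2)

theorem setIntegral_growthRate (hθ : L2fun T θ) (hy : L2fun T y) :
    ∫ t in Ioc (0 : ℝ) T, (⟪y t, θ t⟫ - ‖y t‖ ^ 2 / 2) = ipr y θ T - nrm y T ^ 2 / 2 := by
  rw [integral_sub (hy.integrableOn_inner hθ) (hy.2.div_const 2), integral_div, nrm_sq, ipr]

end SquareIntegrable

section Lagrangian

variable {d : ℕ} {T : ℝ} {θ y w : ℝ → E d} {qa lam μ : ℝ}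

theorem lagrangian_le_of_stationary {F : Type*} [NormedAddCommGroup F] [InnerProductSpace ℝ F]
    {c : ℝ} {y w θ : F} (hc : 0 ≤ c) (hw : c • (θ - w) = μ • w) :
    c * (⟪y, θ⟫ - ‖y‖ ^ 2 / 2) - μ * ⟪y, w⟫ ≤ c * (⟪w, θ⟫ - ‖w‖ ^ 2 / 2) - μ * ⟪w, w⟫ := by
  have hdir : c * ⟪y - w, θ - w⟫ = μ * ⟪y - w, w⟫ := by
    rw [← real_inner_smul_right, hw, real_inner_smul_right]
  have hsq : 0 ≤ c * ‖y - w‖ ^ 2 := by positivity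
  rw [norm_sub_sq_real] at hsq
  simp only [inner_sub_left, inner_sub_right, real_inner_self_eq_norm_sq] at hdir ⊢
  linarith

theorem integrableOn_lagrangian (hθ : L2fun T θ) (hy : L2fun T y) (hw : L2fun T w) (lam μ : ℝ) :
    IntegrableOn (fun t => (om T t + lam) * (⟪y t, θ t⟫ - ‖y t‖ ^ 2 / 2) - μ * ⟪y t, w t⟫)
      (Ioc 0 T) := by
  simp only [add_mul]
  have hg := hθ.integrableOn_growthRate hy
  exact ((integrableOn_om_mul hg).add (hg.const_mul lam)).sub
    ((hy.integrableOn_inner hw).const_mul μ)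

theorem setIntegral_lagrangian (hθ : L2fun T θ) (hy : L2fun T y) (hw : L2fun T w) (lam μ : ℝ) :
    ∫ t in Ioc (0 : ℝ) T,
        ((om T t + lam) * (⟪y t, θ t⟫ - ‖y t‖ ^ 2 / 2) - μ * ⟪y t, w t⟫)
      = investmentGain T θ y + lam * (ipr y θ T - nrm y T ^ 2 / 2) - μ * ipr y w T := by
  have hg := hθ.integrableOn_growthRate hy
  have hsum : IntegrableOn (fun t => om T t * (⟪y t, θ t⟫ - ‖y t‖ ^ 2 / 2)
      + lam * (⟪y t, θ t⟫ - ‖y t‖ ^ 2 / 2)) (Ioc 0 T) :=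
    (integrableOn_om_mul hg).add (hg.const_mul lam)
  simp only [add_mul]
  rw [integral_sub hsum ((hy.integrableOn_inner hw).const_mul μ),
    integral_add (integrableOn_om_mul hg) (hg.const_mul lam), integral_const_mul,
    integral_const_mul, setIntegral_growthRate hθ hy, investmentGain, ipr, ipr]

/-- By Cauchy–Schwarz, `μ (y, w)_T ≤ λ |q_α| ‖y‖_T` with equality at `y = w`, which replaces the
norm in `K_T(y)` by a linear functional of `y`. -/
theorem investmentGain_sub_mul_riskBudget_le (hθ : L2fun T θ) (hy : L2fun T y) (hw : L2fun T w)
    (hlam : 0 ≤ lam) (hμ : 0 ≤ μ) (hμw : μ * nrm w T = lam * |qa|)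
    (hstat : ∀ t ∈ Ioc 0 T, (om T t + lam) • (θ t - w t) = μ • w t) :
    investmentGain T θ y - lam * riskBudget θ y qa T
      ≤ investmentGain T θ w - lam * riskBudget θ w qa T := by
  have hle := setIntegral_mono_on (integrableOn_lagrangian hθ hy hw lam μ)
    (integrableOn_lagrangian hθ hw hw lam μ) measurableSet_Ioc fun t ht =>
      lagrangian_le_of_stationary (add_nonneg (zero_le_one.trans (one_le_om ht.2)) hlam)
        (hstat t ht)
  rw [setIntegral_lagrangian hθ hy hw, setIntegral_lagrangian hθ hw hw, ipr_self] at hle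
  have hlin_y : μ * ipr y w T ≤ lam * |qa| * nrm y T :=
    calc μ * ipr y w T ≤ μ * (nrm y T * nrm w T) := by gcongr; exact ipr_le_nrm_mul_nrm hy hw
      _ = lam * |qa| * nrm y T := by rw [← hμw]; ring
  have hlin_w : μ * nrm w T ^ 2 = lam * |qa| * nrm w T := by rw [← hμw]; ring
  unfold riskBudget
  linarith

theorem riskBudget_le_terminal {t : ℝ} (hθ : L2fun T θ) (hw : L2fun T w)
    (hpos : 0 < nrm w T) (ht : t ∈ Icc 0 T)
    (hinner : ∀ s ∈ Ioc 0 T, 2 * nrm w T * ⟪w s, θ s⟫ ≤ (|qa| + nrm w T) * ‖w s‖ ^ 2) :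
    riskBudget θ w qa t ≤ riskBudget θ w qa T := by
  have hsub : Ioc t T ⊆ Ioc 0 T := Ioc_subset_Ioc_left ht.1
  have split {f : ℝ → ℝ} (hf : IntegrableOn f (Ioc 0 T)) :
      ∫ s in Ioc (0 : ℝ) T, f s = (∫ s in Ioc 0 t, f s) + ∫ s in Ioc t T, f s := by
    rw [← Ioc_union_Ioc_eq_Ioc ht.1 ht.2]
    exact setIntegral_union (Ioc_disjoint_Ioc_of_le le_rfl) measurableSet_Ioc
      (hf.mono_set (Ioc_subset_Ioc_right ht.2)) (hf.mono_set hsub)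
  have hnorm : nrm w T ^ 2 = nrm w t ^ 2 + ∫ s in Ioc t T, ‖w s‖ ^ 2 := by
    rw [nrm_sq, nrm_sq, split hw.2]
  have hipr : ipr w θ T = ipr w θ t + ∫ s in Ioc t T, ⟪w s, θ s⟫ :=
    split (hw.integrableOn_inner hθ)
  have htail : 2 * nrm w T * ∫ s in Ioc t T, ⟪w s, θ s⟫
      ≤ (|qa| + nrm w T) * ∫ s in Ioc t T, ‖w s‖ ^ 2 := by
    rw [← integral_const_mul, ← integral_const_mul]
    exact setIntegral_mono_on (((hw.integrableOn_inner hθ).mono_set hsub).const_mul _)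
      ((hw.2.mono_set hsub).const_mul _) measurableSet_Ioc fun s hs => hinner s (hsub hs)
  have hincr : 0 ≤ 2 * nrm w T * (riskBudget θ w qa T - riskBudget θ w qa t) :=
    calc 0 ≤ |qa| * (nrm w T - nrm w t) ^ 2 := by positivity
      _ ≤ 2 * nrm w T * (riskBudget θ w qa T - riskBudget θ w qa t) := by
        unfold riskBudget
        rw [hipr]
        rw [show ∫ s in Ioc t T, ‖w s‖ ^ 2 = nrm w T ^ 2 - nrm w t ^ 2 by linarith] at htail
        linarith
  exact sub_nonneg.1 (nonneg_of_mul_nonneg_right hincr (by positivity))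

end Lagrangian

section Multiplier

variable {d : ℕ} {T : ℝ} {θ y : ℝ → E d} {qa lam t : ℝ}

theorem Gfun_nrm_le_one (hθ : L2fun T θ) (hθpos : 0 < nrm θ T) (hlam : 0 ≤ lam) :
    Gfun T θ qa (nrm θ T) lam ≤ 1 := by
  calc Gfun T θ qa (nrm θ T) lam
      ≤ ∫ t in Ioc (0 : ℝ) T, 1 / nrm θ T ^ 2 * ‖θ t‖ ^ 2 := by
        refine integral_mono_of_nonneg (Eventually.of_forall fun t => by positivity)
          (hθ.2.const_mul _) (ae_restrict_of_forall_mem measurableSet_Ioc fun t ht => ?_)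
        have hω := one_le_om ht.2
        calc (om T t + lam) ^ 2 * ‖θ t‖ ^ 2 / (lam * |qa| + nrm θ T * (om T t + lam)) ^ 2
            ≤ (om T t + lam) ^ 2 * ‖θ t‖ ^ 2 / (nrm θ T * (om T t + lam)) ^ 2 := by
              gcongr
              exact le_add_of_nonneg_left (by positivity)
          _ = 1 / nrm θ T ^ 2 * ‖θ t‖ ^ 2 := by field_simp
    _ = 1 := by
        rw [integral_const_mul, ← nrm_sq]
        field_simp

theorem continuousOn_Gfun (hθ : L2fun T θ) (hqa : 0 < |qa|) (hlam : 0 < lam) :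
    ContinuousOn (fun u => Gfun T θ qa u lam) (Ici 0) := by
  refine continuousOn_of_dominated
    (bound := fun t => (T + 1 + lam) ^ 2 / (lam * |qa|) ^ 2 * ‖θ t‖ ^ 2) (fun u _ => ?_)
    (fun u (hu : 0 ≤ u) => ?_) (hθ.2.const_mul _) ?_
  · have hω := measurable_om T
    have hθm := hθ.1
    exact Measurable.aestronglyMeasurable (by fun_prop)
  · refine ae_restrict_of_forall_mem measurableSet_Ioc fun t ht => ?_
    have hω := one_le_om ht.2
    rw [norm_of_nonneg (by positivity), div_mul_eq_mul_div]
    gcongr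
    · exact om_le ht.1.le
    · exact le_add_of_nonneg_right (by positivity)
  · refine ae_restrict_of_forall_mem measurableSet_Ioc fun t ht => ?_
    have hω := one_le_om ht.2
    refine ContinuousOn.div (by fun_prop) (by fun_prop) fun u (hu : 0 ≤ u) => ?_
    positivity

theorem bddBelow_Gfun_le_one : BddBelow {u : ℝ | 0 ≤ u ∧ Gfun T θ qa u lam ≤ 1} :=
  ⟨0, fun _ hu => hu.1⟩

theorem rhoReal_nonneg : 0 ≤ rhoReal T θ qa lam :=
  Real.sInf_nonneg fun _ hu => hu.1

theorem rho_eq_ofReal_rhoReal (hθ : L2fun T θ) (hθpos : 0 < nrm θ T) (hlam : 0 ≤ lam) :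
    rho T θ qa lam = ENNReal.ofReal (rhoReal T θ qa lam) :=
  if_pos ⟨nrm θ T, hθpos.le, Gfun_nrm_le_one hθ hθpos hlam⟩

theorem tau_eq (hθ : L2fun T θ) (hθpos : 0 < nrm θ T) (hlam : 0 ≤ lam) (t : ℝ) :
    tau T θ qa lam t = rhoReal T θ qa lam * (om T t + lam) /
      (lam * |qa| + rhoReal T θ qa lam * (om T t + lam)) := by
  rw [tau, rho_eq_ofReal_rhoReal hθ hθpos hlam, if_neg ENNReal.ofReal_ne_top,
    ENNReal.toReal_ofReal rhoReal_nonneg]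

/-- A division by zero: the integrand of `G(0, 0)` is `0`, not `+∞`, so that `u = 0` is feasible
and `τ_0 ≡ 0`, as it is for large `λ`. -/
theorem rhoReal_zero : rhoReal T θ qa 0 = 0 :=
  (csInf_le bddBelow_Gfun_le_one ⟨le_rfl, by simp [Gfun]⟩).antisymm rhoReal_nonneg

theorem pos_of_rhoReal_pos (hlam : 0 ≤ lam) (hρ : 0 < rhoReal T θ qa lam) : 0 < lam :=
  hlam.lt_of_ne fun h => hρ.ne' (h ▸ rhoReal_zero)

theorem Gfun_rhoReal (hθ : L2fun T θ) (hθpos : 0 < nrm θ T) (hqa : 0 < |qa|) (hlam : 0 ≤ lam)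
    (hρ : 0 < rhoReal T θ qa lam) : Gfun T θ qa (rhoReal T θ qa lam) lam = 1 := by
  have hcont := continuousOn_Gfun hθ hqa (pos_of_rhoReal_pos hlam hρ)
  have hclosed : IsClosed {u : ℝ | 0 ≤ u ∧ Gfun T θ qa u lam ≤ 1} :=
    hcont.preimage_isClosed_of_isClosed isClosed_Ici isClosed_Iic
  have hmem := hclosed.csInf_mem ⟨nrm θ T, hθpos.le, Gfun_nrm_le_one hθ hθpos hlam⟩
    bddBelow_Gfun_le_one
  have hG0 : 1 ≤ Gfun T θ qa 0 lam :=
    (not_le.1 fun h => notMem_of_lt_csInf hρ bddBelow_Gfun_le_one ⟨le_rfl, h⟩).le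
  obtain ⟨u, hu, hGu⟩ :=
    intermediate_value_Icc' hρ.le (hcont.mono Icc_subset_Ici_self) ⟨hmem.2, hG0⟩
  have huρ : u = rhoReal T θ qa lam :=
    hu.2.antisymm (csInf_le bddBelow_Gfun_le_one ⟨hu.1, hGu.le⟩)
  exact huρ ▸ hGu

theorem tauStrategy_eq_zero (hθ : L2fun T θ) (hθpos : 0 < nrm θ T) (hlam : 0 ≤ lam)
    (hρ : rhoReal T θ qa lam = 0) : tauStrategy T θ qa lam = 0 := by
  ext1 t
  simp [tauStrategy, tau_eq hθ hθpos hlam, hρ]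

theorem nrm_tauStrategy (hθ : L2fun T θ) (hθpos : 0 < nrm θ T) (hqa : 0 < |qa|) (hlam : 0 ≤ lam) :
    nrm (tauStrategy T θ qa lam) T = rhoReal T θ qa lam := by
  rcases rhoReal_nonneg.eq_or_lt' with hρ | hρ
  · rw [tauStrategy_eq_zero hθ hθpos hlam hρ, hρ]
    simp [nrm]
  · refine (sq_eq_sq₀ (nrm_nonneg _ _) hρ.le).1 ?_
    rw [nrm_sq, ← mul_one (rhoReal T θ qa lam ^ 2), ← Gfun_rhoReal hθ hθpos hqa hlam hρ, Gfun,
      ← integral_const_mul]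
    refine integral_congr_ae (Eventually.of_forall fun t => ?_)
    simp only [tauStrategy, norm_smul, norm_eq_abs, mul_pow, sq_abs, tau_eq hθ hθpos hlam, div_pow]
    ring

theorem measurable_tau : Measurable (tau T θ qa lam) := by
  have hω := measurable_om T
  unfold tau
  split_ifs <;> fun_prop

theorem tau_mem_Icc (hlam : 0 ≤ lam) (ht : t ≤ T) : tau T θ qa lam t ∈ Icc 0 1 := by
  have hω := one_le_om ht
  unfold tau
  split_ifs
  · simp
  · exact ⟨by positivity,
      div_le_one_of_le₀ (le_add_of_nonneg_left (by positivity)) (by positivity)⟩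

theorem L2fun.tauStrategy (hθ : L2fun T θ) (hlam : 0 ≤ lam) :
    L2fun T (tauStrategy T θ qa lam) :=
  hθ.smul (C := 1) measurable_tau fun _ ht => by
    obtain ⟨h0, h1⟩ := tau_mem_Icc (θ := θ) (qa := qa) hlam ht.2
    rwa [abs_of_nonneg h0]

theorem Phi_eq_riskBudget : Phi T θ qa lam = riskBudget θ (tauStrategy T θ qa lam) qa T := by
  unfold Phi riskBudget ipr tauStrategy
  simp only [real_inner_smul_left, real_inner_self_eq_norm_sq]

theorem tauStrategy_stationary (hθ : L2fun T θ) (hθpos : 0 < nrm θ T) (hlam : 0 ≤ lam)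
    (hρ : 0 < rhoReal T θ qa lam) (ht : t ≤ T) :
    (om T t + lam) • (θ t - tauStrategy T θ qa lam t)
      = (lam * |qa| / rhoReal T θ qa lam) • tauStrategy T θ qa lam t := by
  have hω := one_le_om ht
  have hcoeff : (om T t + lam) * (1 - tau T θ qa lam t)
      = lam * |qa| / rhoReal T θ qa lam * tau T θ qa lam t := by
    rw [tau_eq hθ hθpos hlam]
    field_simp
    ring
  rw [tauStrategy, smul_smul, ← hcoeff, mul_smul, sub_smul, one_smul]

theorem investmentGain_le_tauStrategy (hθ : L2fun T θ) (hy : L2fun T y) (hθpos : 0 < nrm θ T)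
    (hqa : nrm θ T < |qa|) (hlam : 0 ≤ lam) (hK : riskBudget θ y qa T ≤ Phi T θ qa lam) :
    investmentGain T θ y ≤ investmentGain T θ (tauStrategy T θ qa lam) := by
  rcases rhoReal_nonneg.eq_or_lt' with hρ | hρ
  · have hτ := tauStrategy_eq_zero hθ hθpos hlam hρ
    have hΦ : Phi T θ qa lam = 0 := by
      rw [Phi_eq_riskBudget, hτ]
      simp [riskBudget, nrm, ipr]
    have hy0 : nrm y T = 0 := by
      have hmul := (sub_nrm_mul_nrm_le_riskBudget hθ hy qa).trans (hK.trans hΦ.le)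
      exact (nonpos_of_mul_nonpos_right hmul (sub_pos.2 hqa)).antisymm (nrm_nonneg y T)
    have hgain : investmentGain T θ y = 0 := integral_eq_zero_of_ae <| by
      filter_upwards [ae_eq_zero_of_nrm_eq_zero hy hy0] with t ht
      simp [ht]
    rw [hgain, hτ]
    simp [investmentGain]
  · have hqa0 : 0 < |qa| := hθpos.trans hqa
    have hL := investmentGain_sub_mul_riskBudget_le (qa := qa) hθ hy (hθ.tauStrategy hlam) hlam
      (div_nonneg (by positivity) hρ.le)
      (by rw [nrm_tauStrategy hθ hθpos hqa0 hlam, div_mul_cancel₀ _ hρ.ne'])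
      fun t ht => tauStrategy_stationary hθ hθpos hlam hρ ht.2
    rw [← Phi_eq_riskBudget] at hL
    linarith [mul_le_mul_of_nonneg_left hK hlam]

theorem mul_abs_add_rhoReal_mul_le (hθ : L2fun T θ) (hT : 0 ≤ T) (hθpos : 0 < nrm θ T)
    (hqa : 0 < |qa|) (hlam : 0 ≤ lam) (hρ : 0 < rhoReal T θ qa lam) :
    lam * |qa| + rhoReal T θ qa lam * (T + 1 + lam) ≤ (T + 1 + lam) * nrm θ T := by
  set ρ := rhoReal T θ qa lam
  have hden : 0 < lam * |qa| + ρ * (T + 1 + lam) := by positivity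
  have hτ : ∀ t ∈ Ioc 0 T,
      |tau T θ qa lam t| ≤ ρ * (T + 1 + lam) / (lam * |qa| + ρ * (T + 1 + lam)) := fun t ht => by
    have hω := one_le_om ht.2
    have hmono : lam * |qa| * ρ * om T t ≤ lam * |qa| * ρ * (T + 1) := by
      gcongr
      exact om_le ht.1.le
    rw [abs_of_nonneg (tau_mem_Icc hlam ht.2).1, tau_eq hθ hθpos hlam,
      div_le_div_iff₀ (by positivity) hden]
    linarith
  have hle : ρ ≤ ρ * (T + 1 + lam) / (lam * |qa| + ρ * (T + 1 + lam)) * nrm θ T :=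
    (nrm_tauStrategy hθ hθpos hqa hlam).ge.trans (nrm_smul_le hθ (by positivity) hτ)
  rw [div_mul_eq_mul_div, le_div_iff₀ hden, mul_assoc ρ] at hle
  exact le_of_mul_le_mul_left hle hρ

theorem mul_abs_add_rhoReal_le (hθ : L2fun T θ) (hT : 0 ≤ T) (hθpos : 0 < nrm θ T)
    (hqa : (T + 2) * nrm θ T ≤ |qa|) (hlam : 0 ≤ lam) (hρ : 0 < rhoReal T θ qa lam) :
    lam * (|qa| + rhoReal T θ qa lam) ≤ |qa| - rhoReal T θ qa lam := by
  have hqa0 : 0 < |qa| := lt_of_lt_of_le (by positivity) hqa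
  have hmul := mul_abs_add_rhoReal_mul_le hθ hT hθpos hqa0 hlam hρ
  set ρ := rhoReal T θ qa lam
  have hlam1 : lam ≤ 1 := by
    have hN : 0 < (T + 1) * nrm θ T := by positivity
    refine le_of_mul_le_mul_right ?_ hN
    have h1 := mul_le_mul_of_nonneg_left hqa hlam
    have h2 : 0 ≤ ρ * (T + 1 + lam) := by positivity
    linarith
  have h1 := mul_le_mul_of_nonneg_right hlam1 hθpos.le
  have h2 := mul_nonneg hT hρ.le
  linarith

theorem riskBudget_tauStrategy_le_Phi (hθ : L2fun T θ) (hθpos : 0 < nrm θ T)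
    (hqa : (T + 2) * nrm θ T ≤ |qa|) (hlam : 0 ≤ lam) (ht : t ∈ Icc 0 T) :
    riskBudget θ (tauStrategy T θ qa lam) qa t ≤ Phi T θ qa lam := by
  have hT : 0 ≤ T := ht.1.trans ht.2
  have hqa0 : 0 < |qa| := lt_of_lt_of_le (by positivity) hqa
  rw [Phi_eq_riskBudget]
  rcases rhoReal_nonneg.eq_or_lt' with hρ | hρ
  · rw [tauStrategy_eq_zero hθ hθpos hlam hρ]
    simp [riskBudget, nrm, ipr]
  have hnrm := nrm_tauStrategy hθ hθpos hqa0 hlam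
  refine riskBudget_le_terminal hθ (hθ.tauStrategy hlam) (hnrm ▸ hρ) ht fun s hs => ?_
  have hω := one_le_om hs.2
  have hlam' := mul_abs_add_rhoReal_le hθ hT hθpos hqa hlam hρ
  have hτ0 : 0 ≤ tau T θ qa lam s := (tau_mem_Icc hlam hs.2).1
  rw [hnrm]
  have hτ : 2 * rhoReal T θ qa lam ≤ (|qa| + rhoReal T θ qa lam) * tau T θ qa lam s := by
    rw [tau_eq hθ hθpos hlam]
    set ρ := rhoReal T θ qa lam
    have hρqa : 0 ≤ |qa| - ρ := (by positivity : 0 ≤ lam * (|qa| + ρ)).trans hlam'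
    have h1 := mul_le_mul_of_nonneg_right (mul_le_mul_of_nonneg_left hω hρqa) hρ.le
    have h2 := mul_le_mul_of_nonneg_left hlam' hρ.le
    rw [mul_div_assoc', le_div_iff₀ (by positivity)]
    linarith
  simp only [tauStrategy, real_inner_smul_left, real_inner_self_eq_norm_sq, norm_smul, mul_pow,
    norm_eq_abs, sq_abs]
  have h := mul_le_mul_of_nonneg_right hτ (mul_nonneg hτ0 (sq_nonneg ‖θ s‖))
  linarith

end Multiplier

section Consumption

variable {d : ℕ} {T : ℝ} {v : ℝ → ℝ} {k t : ℝ}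

theorem monotoneOn_Vtot (hv : IntegrableOn v (Ioc 0 T)) (hv0 : ∀ t ∈ Ioc 0 T, 0 ≤ v t) :
    MonotoneOn (Vtot v) (Icc 0 T) := fun _ _ _ ht hst =>
  setIntegral_mono_set (hv.mono_set (Ioc_subset_Ioc_right ht.2))
    (ae_restrict_of_forall_mem measurableSet_Ioc fun u hu => hv0 u ⟨hu.1, hu.2.trans ht.2⟩)
    (Ioc_subset_Ioc_right hst).eventuallyLE

theorem integrableOn_Vtot (hv : IntegrableOn v (Ioc 0 T)) : IntegrableOn (Vtot v) (Ioc 0 T) :=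
  ContinuousOn.integrableOn_Icc (intervalIntegral.continuousOn_primitive
    ((integrableOn_Icc_iff_integrableOn_Ioc).2 hv)) |>.mono_set Ioc_subset_Icc_self

theorem Vtot_pos (hT : 0 < T) (hv : IntegrableOn v (Ioc 0 T)) (hpos : ∀ t ∈ Ioo 0 T, 0 < v t) :
    0 < Vtot v T := by
  rw [Vtot, ← intervalIntegral.integral_of_le hT.le]
  exact intervalIntegral.intervalIntegral_pos_of_pos_on
    ((intervalIntegrable_iff_integrableOn_Ioc_of_le hT.le).2 hv) hpos hT

theorem Admiss.integrableOn_log {y : ℝ → E d} (h : Admiss T y v) :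
    IntegrableOn (fun t => log (v t)) (Ioc 0 T) := by
  obtain ⟨-, -, hvm, hpos, hv, hneg⟩ := h
  refine (hv.add hneg).mono' hvm.log.aestronglyMeasurable
    (ae_restrict_of_forall_mem measurableSet_Ioc fun t ht => abs_le.2 ⟨?_, ?_⟩)
  · simp only [Pi.add_apply]
    linarith [le_max_left (-log (v t)) 0, hpos t (Ioc_subset_Icc_self ht)]
  · simp only [Pi.add_apply]
    linarith [le_max_right (-log (v t)) 0, log_le_self (hpos t (Ioc_subset_Icc_self ht)).le]

theorem ae_hasDerivAt_Vtot (hT : 0 ≤ T) (hv : IntegrableOn v (Ioc 0 T)) :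
    ∀ᵐ t ∂volume.restrict (Ioc 0 T), HasDerivAt (Vtot v) (v t) t := by
  rw [ae_restrict_iff' measurableSet_Ioc]
  filter_upwards [((intervalIntegrable_iff_integrableOn_Ioc_of_le hT).2 hv).ae_hasDerivAt_integral]
    with t hderiv ht
  rw [uIcc_of_le hT] at hderiv
  refine (hderiv (Ioc_subset_Icc_self ht) 0 (left_mem_Icc.2 hT)).congr_of_eventuallyEq ?_
  filter_upwards [lt_mem_nhds ht.1] with s hs
  exact (intervalIntegral.integral_of_le hs.le).symm

theorem integrableOn_mul_exp_neg_Vtot (hv : IntegrableOn v (Ioc 0 T))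
    (hv0 : ∀ t ∈ Ioc 0 T, 0 ≤ v t) : IntegrableOn (fun t => v t * exp (-Vtot v t)) (Ioc 0 T) := by
  refine Integrable.mul_bdd (c := 1) hv
    (integrableOn_Vtot hv).aestronglyMeasurable.neg.aemeasurable.exp.aestronglyMeasurable
    (ae_restrict_of_forall_mem measurableSet_Ioc fun t ht => ?_)
  rw [norm_of_nonneg (exp_pos _).le]
  refine exp_le_one_iff.2 (neg_nonpos.2 (setIntegral_nonneg measurableSet_Ioc fun s hs => ?_))
  exact hv0 s ⟨hs.1, hs.2.trans ht.2⟩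

/-- Only this inequality is needed, and it holds for the derivative of any monotone function, so
that the absolute continuity of `exp (-V)` need not be established. -/
theorem setIntegral_mul_exp_neg_Vtot_le (hT : 0 ≤ T) (hv : IntegrableOn v (Ioc 0 T))
    (hv0 : ∀ t ∈ Ioc 0 T, 0 ≤ v t) :
    ∫ t in Ioc (0 : ℝ) T, v t * exp (-Vtot v t) ≤ 1 - exp (-Vtot v T) := by
  have hmono : MonotoneOn (fun t => -exp (-Vtot v t)) (uIcc 0 T) := by
    rw [uIcc_of_le hT]
    exact fun s hs t ht hst =>
      neg_le_neg (exp_le_exp.2 (neg_le_neg (monotoneOn_Vtot hv hv0 hs ht hst)))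
  have hderiv : ∫ t in Ioc (0 : ℝ) T, v t * exp (-Vtot v t)
      = ∫ t in (0 : ℝ)..T, deriv (fun t => -exp (-Vtot v t)) t := by
    rw [intervalIntegral.integral_of_le hT]
    refine integral_congr_ae ?_
    filter_upwards [ae_hasDerivAt_Vtot hT hv] with t ht
    rw [ht.fun_neg.exp.fun_neg.deriv]
    ring
  have hV0 : Vtot v 0 = 0 := by simp [Vtot]
  have hle : -exp (-Vtot v 0) ≤ -exp (-Vtot v T) :=
    hmono left_mem_uIcc right_mem_uIcc hT
  have hmem := hmono.intervalIntegral_deriv_mem_uIcc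
  rw [uIcc_of_le (sub_nonneg.2 hle), hV0, neg_zero, exp_zero] at hmem
  rw [hderiv]
  linarith [hmem.2]

theorem setIntegral_log_le {p : ℝ → ℝ} {c : ℝ} (hT : 0 ≤ T) (hc : 0 < c)
    (hpos : ∀ t ∈ Ioc 0 T, 0 < p t) (hp : IntegrableOn p (Ioc 0 T))
    (hlog : IntegrableOn (fun t => log (p t)) (Ioc 0 T))
    (hle : ∫ t in Ioc (0 : ℝ) T, p t ≤ T * c) :
    ∫ t in Ioc (0 : ℝ) T, log (p t) ≤ T * log c :=
  have hconst : IntegrableOn (fun _ : ℝ => log c - 1) (Ioc 0 T) := by simp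
  calc ∫ t in Ioc (0 : ℝ) T, log (p t)
      ≤ ∫ t in Ioc (0 : ℝ) T, (p t / c + (log c - 1)) := by
        refine setIntegral_mono_on hlog ((hp.div_const c).add hconst) measurableSet_Ioc
          fun t ht => ?_
        have htangent := log_le_sub_one_of_pos (div_pos (hpos t ht) hc)
        rw [log_div (hpos t ht).ne' hc.ne'] at htangent
        linarith
    _ = (∫ t in Ioc (0 : ℝ) T, p t) / c + T * (log c - 1) := by
        rw [integral_add (hp.div_const c) hconst, integral_div, setIntegral_const,
          volume_real_Ioc_of_le hT, sub_zero, smul_eq_mul]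
    _ ≤ T * log c := by linarith [(div_le_iff₀ hc).2 hle]

theorem consumptionGain_le (hT : 0 < T) (hpos : ∀ t ∈ Ioc 0 T, 0 < v t)
    (hv : IntegrableOn v (Ioc 0 T)) (hlog : IntegrableOn (fun t => log (v t)) (Ioc 0 T)) :
    consumptionGain T v ≤ T * log ((1 - exp (-Vtot v T)) / T) := by
  have hV : 0 < Vtot v T := Vtot_pos hT hv fun t ht => hpos t (Ioo_subset_Ioc_self ht)
  have hlog_eq : ∀ t ∈ Ioc 0 T, log (v t) - Vtot v t = log (v t * exp (-Vtot v t)) :=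
    fun t ht => by rw [log_mul (hpos t ht).ne' (exp_pos _).ne', log_exp, sub_eq_add_neg]
  rw [consumptionGain, setIntegral_congr_fun measurableSet_Ioc hlog_eq]
  refine setIntegral_log_le hT.le (div_pos (sub_pos.2 (exp_lt_one_iff.2 (neg_neg_of_pos hV))) hT)
    (fun t ht => mul_pos (hpos t ht) (exp_pos _))
    (integrableOn_mul_exp_neg_Vtot hv fun t ht => (hpos t ht).le)
    ((hlog.sub (integrableOn_Vtot hv)).congr_fun hlog_eq measurableSet_Ioc) ?_
  rw [mul_div_cancel₀ _ hT.ne']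
  exact setIntegral_mul_exp_neg_Vtot_le hT.le hv fun t ht => (hpos t ht).le

theorem vk_den_pos (hT : 0 < T) (hk : k < 1) (ht : t ∈ Icc 0 T) : 0 < T - t * k := by
  rcases ht.1.eq_or_lt with rfl | ht0
  · simpa
  · linarith [ht.2, mul_lt_mul_of_pos_left hk ht0]

theorem vk_pos (hT : 0 < T) (hk0 : 0 < k) (hk : k < 1) (ht : t ∈ Icc 0 T) : 0 < vk T k t :=
  div_pos hk0 (vk_den_pos hT hk ht)

theorem continuousOn_vk (hT : 0 < T) (hk : k < 1) : ContinuousOn (vk T k) (Icc 0 T) :=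
  continuousOn_const.div (by fun_prop) fun _ ht => (vk_den_pos hT hk ht).ne'

theorem integrableOn_vk (hT : 0 < T) (hk : k < 1) : IntegrableOn (vk T k) (Ioc 0 T) :=
  (continuousOn_vk hT hk).integrableOn_Icc.mono_set Ioc_subset_Icc_self

theorem Vtot_vk (hT : 0 < T) (hk : k < 1) (ht : t ∈ Icc 0 T) :
    Vtot (vk T k) t = log T - log (T - t * k) := by
  have hderiv : ∀ s ∈ uIcc 0 t, HasDerivAt (fun s => -log (T - s * k)) (vk T k s) s := by
    intro s hs
    rw [uIcc_of_le ht.1] at hs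
    have hden : HasDerivAt (fun s : ℝ => T - s * k) (-k) s := by
      simpa using ((hasDerivAt_id s).mul_const k).const_sub T
    exact (hden.log (vk_den_pos hT hk ⟨hs.1, hs.2.trans ht.2⟩).ne').fun_neg.congr_deriv
      (by rw [vk, neg_div, neg_neg])
  have hint : IntervalIntegrable (vk T k) volume 0 t :=
    (intervalIntegrable_iff_integrableOn_Ioc_of_le ht.1).2
      ((integrableOn_vk hT hk).mono_set (Ioc_subset_Ioc_right ht.2))
  rw [Vtot, ← intervalIntegral.integral_of_le ht.1,
    intervalIntegral.integral_eq_sub_of_hasDerivAt hderiv hint, zero_mul, sub_zero]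
  ring

theorem Vtot_vk_end (hT : 0 < T) (hk : k < 1) : Vtot (vk T k) T = -log (1 - k) := by
  rw [Vtot_vk hT hk (right_mem_Icc.2 hT.le), ← mul_one_sub, log_mul hT.ne' (sub_pos.2 hk).ne']
  ring

theorem Vtot_vk_le (hT : 0 < T) (hk0 : 0 < k) (hk : k < 1) (ht : t ∈ Icc 0 T) :
    Vtot (vk T k) t ≤ -log (1 - k) :=
  Vtot_vk_end hT hk ▸ monotoneOn_Vtot (integrableOn_vk hT hk)
    (fun _ hs => (vk_pos hT hk0 hk (Ioc_subset_Icc_self hs)).le) ht (right_mem_Icc.2 hT.le) ht.2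

theorem log_vk_sub_Vtot (hT : 0 < T) (hk0 : 0 < k) (hk : k < 1) (ht : t ∈ Icc 0 T) :
    log (vk T k t) - Vtot (vk T k) t = log (k / T) := by
  rw [Vtot_vk hT hk ht, vk, log_div hk0.ne' (vk_den_pos hT hk ht).ne', log_div hk0.ne' hT.ne']
  ring

theorem consumptionGain_vk (hT : 0 < T) (hk0 : 0 < k) (hk : k < 1) :
    consumptionGain T (vk T k) = T * log (k / T) := by
  rw [consumptionGain, setIntegral_congr_fun measurableSet_Ioc
    fun t ht => log_vk_sub_Vtot hT hk0 hk (Ioc_subset_Icc_self ht), setIntegral_const,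
    volume_real_Ioc_of_le hT.le, sub_zero, smul_eq_mul]

theorem admiss_vk {y : ℝ → E d} (hy : L2fun T y) (hT : 0 < T) (hk0 : 0 < k) (hk : k < 1) :
    Admiss T y (vk T k) := by
  have hlog : ContinuousOn (fun t => max (-log (vk T k t)) 0) (Icc 0 T) :=
    ((continuousOn_vk hT hk).log fun t ht => (vk_pos hT hk0 hk ht).ne').fun_neg.sup
      continuousOn_const
  exact ⟨hy.1, hy.2, by unfold vk; fun_prop, fun t => vk_pos hT hk0 hk, integrableOn_vk hT hk,
    hlog.integrableOn_Icc.mono_set Ioc_subset_Icc_self⟩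

end Consumption

section Verification

variable {d : ℕ} {T : ℝ} {θ y : ℝ → E d} {v r Finv : ℝ → ℝ} {qa x z k : ℝ}

theorem VaROK_iff_riskBudget :
    VaROK T θ y v qa z ↔ ∀ t ∈ Icc 0 T, Vtot v t + riskBudget θ y qa t ≤ -log (1 - z) := by
  refine forall₂_congr fun t _ => ?_
  unfold riskBudget
  constructor <;> intro h <;> linarith

theorem Jcost_eq (hθ : L2fun T θ) (hy : L2fun T y) (hr : IntegrableOn r (Ioc 0 T)) :
    Jcost T x r θ y v = Aconst T x r + T * log T + investmentGain T θ y + consumptionGain T v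
      - Vtot v T := by
  have hsplit : ∫ t in Ioc (0 : ℝ) T, om T t * (r t + ⟪y t, θ t⟫ - ‖y t‖ ^ 2 / 2)
      = (∫ t in Ioc (0 : ℝ) T, om T t * r t) + investmentGain T θ y := by
    rw [investmentGain, ← integral_add (integrableOn_om_mul hr)
      (integrableOn_om_mul (hθ.integrableOn_growthRate hy))]
    simp only [add_sub_assoc, mul_add]
  rw [Jcost, hsplit, Aconst, consumptionGain]
  ring

theorem investmentGain_tauStrategy (lam : ℝ) :
    investmentGain T θ (tauStrategy T θ qa lam) = ∫ t in Ioc (0 : ℝ) T,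
      om T t * ‖θ t‖ ^ 2 * (tau T θ qa lam t - tau T θ qa lam t ^ 2 / 2) := by
  refine integral_congr_ae (Eventually.of_forall fun t => ?_)
  simp only [tauStrategy, real_inner_smul_left, real_inner_self_eq_norm_sq, norm_smul, mul_pow,
    norm_eq_abs, sq_abs]
  ring

theorem Gam_eq : Gam T θ qa z Finv k = log (1 - k) + T * log k
    + investmentGain T θ (tauStrategy T θ qa (budgetMultiplier z Finv k)) := by
  rw [investmentGain_tauStrategy]
  rfl

theorem ystarV_eq_tauStrategy :
    ystarV T θ qa z Finv k = tauStrategy T θ qa (budgetMultiplier z Finv k) :=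
  rfl

theorem budgetMultiplier_spec (hz : z < 1)
    (hFinv : ∀ b, 0 ≤ b → b ≤ -log (1 - z) → 0 ≤ Finv b ∧ Phi T θ qa (Finv b) = b)
    (hk : k ∈ Icc 0 z) :
    0 ≤ budgetMultiplier z Finv k ∧
      Phi T θ qa (budgetMultiplier z Finv k) = log (1 - k) - log (1 - z) := by
  have hz0 : 0 < 1 - z := sub_pos.2 hz
  have hkz : 1 - z ≤ 1 - k := sub_le_sub_left hk.2 1
  have hlog_k : log (1 - k) ≤ 0 := log_nonpos (hz0.le.trans hkz) (sub_le_self 1 hk.1)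
  have hlog_z : log (1 - z) ≤ log (1 - k) := log_le_log hz0 hkz
  rw [budgetMultiplier, log_div (hz0.trans_le hkz).ne' hz0.ne']
  exact hFinv _ (sub_nonneg.2 hlog_z) (by linarith)

theorem Jcost_ystarV_vk (hθ : L2fun T θ) (hT : 0 < T) (hr : IntegrableOn r (Ioc 0 T))
    (hlam : 0 ≤ budgetMultiplier z Finv k) (hk0 : 0 < k) (hk : k < 1) :
    Jcost T x r θ (ystarV T θ qa z Finv k) (vk T k) = Aconst T x r + Gam T θ qa z Finv k := by
  rw [ystarV_eq_tauStrategy, Jcost_eq hθ (hθ.tauStrategy hlam) hr, Gam_eq,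
    consumptionGain_vk hT hk0 hk, Vtot_vk_end hT hk, log_div hk0.ne' hT.ne']
  ring

theorem VaROK_ystarV_vk (hθ : L2fun T θ) (hT : 0 < T) (hθpos : 0 < nrm θ T)
    (hqa : (T + 2) * nrm θ T ≤ |qa|) (hlam : 0 ≤ budgetMultiplier z Finv k)
    (hΦ : Phi T θ qa (budgetMultiplier z Finv k) = log (1 - k) - log (1 - z))
    (hk0 : 0 < k) (hk : k < 1) : VaROK T θ (ystarV T θ qa z Finv k) (vk T k) qa z := by
  rw [VaROK_iff_riskBudget, ystarV_eq_tauStrategy]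
  intro t ht
  linarith [riskBudget_tauStrategy_le_Phi hθ hθpos hqa hlam ht, Vtot_vk_le hT hk0 hk ht]

theorem exists_Jcost_le_Gam (hθ : L2fun T θ) (hT : 0 < T) (hθpos : 0 < nrm θ T)
    (hqa : nrm θ T < |qa|) (hr : IntegrableOn r (Ioc 0 T)) (hz : z < 1)
    (hFinv : ∀ b, 0 ≤ b → b ≤ -log (1 - z) → 0 ≤ Finv b ∧ Phi T θ qa (Finv b) = b)
    (hν : Admiss T y v) (hVaR : VaROK T θ y v qa z) :
    ∃ k ∈ Ioc 0 z, Jcost T x r θ y v ≤ Aconst T x r + Gam T θ qa z Finv k := by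
  have hlogv : IntegrableOn (fun t => log (v t)) (Ioc 0 T) := hν.integrableOn_log
  obtain ⟨hym, hy2, -, hvpos, hv, -⟩ := hν
  have hy : L2fun T y := ⟨hym, hy2⟩
  have hVpos : 0 < Vtot v T := Vtot_pos hT hv fun t ht => hvpos t (Ioo_subset_Icc_self ht)
  have hrisk : Vtot v T + riskBudget θ y qa T ≤ -log (1 - z) :=
    VaROK_iff_riskBudget.1 hVaR T (right_mem_Icc.2 hT.le)
  have hrisk0 : 0 ≤ riskBudget θ y qa T :=
    (mul_nonneg (sub_nonneg.2 hqa.le) (nrm_nonneg y T)).trans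
      (sub_nrm_mul_nrm_le_riskBudget hθ hy qa)
  obtain ⟨k, hk⟩ : ∃ k, k = 1 - exp (-Vtot v T) := ⟨_, rfl⟩
  have hlog : log (1 - k) = -Vtot v T := by rw [hk, sub_sub_cancel, log_exp]
  have hk0 : 0 < k := hk ▸ sub_pos.2 (exp_lt_one_iff.2 (neg_neg_of_pos hVpos))
  have hkz : k ≤ z := by
    have hexp : 1 - z ≤ exp (-Vtot v T) :=
      (log_le_iff_le_exp (sub_pos.2 hz)).1 (by linarith)
    linarith
  obtain ⟨hlam, hΦ⟩ := budgetMultiplier_spec hz hFinv ⟨hk0.le, hkz⟩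
  have hinvest : investmentGain T θ y
      ≤ investmentGain T θ (tauStrategy T θ qa (budgetMultiplier z Finv k)) :=
    investmentGain_le_tauStrategy hθ hy hθpos hqa hlam (by linarith)
  have hconsume : consumptionGain T v ≤ T * log (k / T) :=
    hk ▸ consumptionGain_le hT (fun t ht => hvpos t (Ioc_subset_Icc_self ht)) hv hlogv
  rw [log_div hk0.ne' hT.ne'] at hconsume
  refine ⟨k, ⟨hk0, hkz⟩, ?_⟩
  rw [Jcost_eq hθ hy hr, Gam_eq]
  linarith

theorem stmt3_general (hT : 0 < T) (hθ : L2fun T θ) (hθpos : 0 < nrm θ T)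
    (hqa : (T + 2) * nrm θ T ≤ |qa|) (hr : IntegrableOn r (Ioc 0 T)) (_hx : 0 < x) (hz : z < 1)
    (hFinv : ∀ b, 0 ≤ b → b ≤ -log (1 - z) → 0 ≤ Finv b ∧ Phi T θ qa (Finv b) = b)
    {γ : ℝ} (hγ : γ ∈ Ioc 0 z)
    (hγmax : ∀ k ∈ Ioc 0 z, Gam T θ qa z Finv k ≤ Gam T θ qa z Finv γ) :
    Admiss T (ystarV T θ qa z Finv γ) (vk T γ) ∧
    VaROK T θ (ystarV T θ qa z Finv γ) (vk T γ) qa z ∧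
    Jcost T x r θ (ystarV T θ qa z Finv γ) (vk T γ) = Aconst T x r + Gam T θ qa z Finv γ ∧
    ∀ (y : ℝ → E d) (v : ℝ → ℝ), Admiss T y v → VaROK T θ y v qa z →
      Jcost T x r θ y v ≤ Aconst T x r + Gam T θ qa z Finv γ := by
  obtain ⟨hlam, hΦ⟩ := budgetMultiplier_spec hz hFinv (Ioc_subset_Icc_self hγ)
  have hγ1 : γ < 1 := hγ.2.trans_lt hz
  have hqa' : nrm θ T < |qa| := (lt_mul_left hθpos (by linarith)).trans_le hqa
  refine ⟨admiss_vk (hθ.tauStrategy hlam) hT hγ.1 hγ1,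
    VaROK_ystarV_vk hθ hT hθpos hqa hlam hΦ hγ.1 hγ1,
    Jcost_ystarV_vk hθ hT hr hlam hγ.1 hγ1, fun y v hν hVaR => ?_⟩
  obtain ⟨k, hk, hJ⟩ := exists_Jcost_le_Gam (x := x) hθ hT hθpos hqa' hr hz hFinv hν hVaR
  exact hJ.trans (add_le_add_right (hγmax k hk) _)

end Verification

/-- Theorem 4.3 of the paper. -/
theorem stmt3 {d : ℕ} (hd : 1 ≤ d) {T : ℝ} (hT : 0 < T)
    (θ : ℝ → E d) (hθm : Measurable θ)
    (hθ2 : IntegrableOn (fun t => ‖θ t‖ ^ 2) (Set.Ioc 0 T))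
    {a qa : ℝ} (ha0 : 0 < a) (ha2 : a < 1 / 2) (hqneg : qa < 0)
    (hquant : (∫ s in Set.Iic qa, Real.exp (-s ^ 2 / 2)) = a * Real.sqrt (2 * π))
    (r : ℝ → ℝ) (hr : IntegrableOn r (Set.Ioc 0 T)) {x : ℝ} (hx : 0 < x)
    (hθpos : 0 < nrm θ T)
    {z : ℝ} (hz0 : 0 < z)
    (hz1 : z < 1 - Real.exp (-(|qa| * nrm θ T) + nrm θ T ^ 2 / 2))
    (hqbig : 2 * (T + 1) * nrm θ T ≤ |qa|)
    (Finv : ℝ → ℝ)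
    (hFinv : ∀ b : ℝ, 0 ≤ b → b ≤ -Real.log (1 - z) →
      Finv b ∈ Set.Icc 0 (lamMax T θ qa) ∧ Phi T θ qa (Finv b) = b)
    {γ : ℝ} (hγmem : γ ∈ Set.Ioc 0 z)
    (hγmax : ∀ k ∈ Set.Ioc (0:ℝ) z, Gam T θ qa z Finv k ≤ Gam T θ qa z Finv γ) :
    Admiss T (ystarV T θ qa z Finv γ) (vk T γ) ∧
    VaROK T θ (ystarV T θ qa z Finv γ) (vk T γ) qa z ∧
    Jcost T x r θ (ystarV T θ qa z Finv γ) (vk T γ) = Aconst T x r + Gam T θ qa z Finv γ ∧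
    ∀ (y : ℝ → E d) (v : ℝ → ℝ), Admiss T y v → VaROK T θ y v qa z →
      Jcost T x r θ y v ≤ Aconst T x r + Gam T θ qa z Finv γ := by
  exact stmt3_general hT ⟨hθm, hθ2⟩ hθpos
    ((mul_le_mul_of_nonneg_right (by linarith) hθpos.le).trans hqbig) hr hx
    (hz1.trans (sub_lt_self 1 (exp_pos _)))
    (fun b hb0 hb => ⟨(hFinv b hb0 hb).1.1, (hFinv b hb0 hb).2⟩) hγmem hγmax
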